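/- Let β_n > β_{n−1} > ⋯ > β_1 ≥ 0 and c_1, …, c_{n−1} ∈ ℝ, and let β_* be the maximum of those β_j (j < n) for which β_n − β_j is not an integer, with β_* = 0 if no such β_j exists. Let w ∈ L¹[0,b] and let f be any linear combination of t^{β_n−1}, t^{β_n−2}, …, t^{β_n−⌈β_n−β_*⌉}. If u ∈ L¹[0,b] solves the fractional integral equation (c_1 I^{β_n−β_1} + ⋯ + c_{n−1} I^{β_n−β_{n−1}} + Id) u(t) = I^{β_n} w(t) + f(t) almost everywhere on [0,b], then u belongs to the intersection X_{β_1} ∩ ⋯ ∩ X_{β_n}; consequently u is a (strong) solution of the fractional differential equation (c_1 D^{β_1} + ⋯ + c_{n−1} D^{β_{n−1}} + D^{β_n}) u = w. -/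

import Mathlib

open MeasureTheory Set Filter Topology

open Classical in
/-- Riemann–Liouville fractional integral of order `α` with base point `0`;
`RL 0` is the identity operator. -/
noncomputable def RL (α : ℝ) (f : ℝ → ℝ) : ℝ → ℝ := fun t =>
  if α = 0 then f t
  else (1 / Real.Gamma α) * ∫ s in (0:ℝ)..t, (t - s) ^ (α - 1) * f s

/-- `g ∈ AC[0,b]`: `g t = g 0 + ∫₀ᵗ φ` for some `φ ∈ L¹[0,b]`. -/
def MemAC (b : ℝ) (g : ℝ → ℝ) : Prop :=
  ∃ φ : ℝ → ℝ, IntegrableOn φ (Set.Icc 0 b) volume ∧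
    ∀ t ∈ Set.Icc (0:ℝ) b, g t = g 0 + ∫ s in (0:ℝ)..t, φ s

/-- `g ∈ AC^n[0,b]`: `g ∈ C^{n-1}[0,b]` and `D^{n-1} g ∈ AC[0,b]`. -/
def MemACn (b : ℝ) (n : ℕ) (g : ℝ → ℝ) : Prop :=
  ContDiffOn ℝ (n - 1 : ℕ) g (Set.Icc 0 b) ∧
    MemAC b (iteratedDerivWithin (n - 1) g (Set.Icc 0 b))

/-- `f ∈ X_α`, the space of functions with summable fractional derivative of order `α`:
`f ∈ L¹[0,b]` and (for `α ≠ 0`) `I^{⌈α⌉-α} f ∈ AC^{⌈α⌉}[0,b]`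
(as an element of `L¹`, i.e. it has an `AC^{⌈α⌉}` representative); `X_0 = L¹[0,b]`. -/
def MemX (b : ℝ) (α : ℝ) (f : ℝ → ℝ) : Prop :=
  IntegrableOn f (Set.Icc 0 b) volume ∧
    (α ≠ 0 → ∃ g : ℝ → ℝ,
      g =ᵐ[volume.restrict (Set.Icc 0 b)] RL ((⌈α⌉₊ : ℝ) - α) f ∧ MemACn b ⌈α⌉₊ g)

/-- `φ` is the Riemann–Liouville fractional derivative of order `α` of `f`,
i.e. `D^α f = D^{⌈α⌉}(I^{⌈α⌉-α} f) = φ`, the last derivative taken in the weak sense: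
`D^{⌈α⌉-1}` of (the `AC^{⌈α⌉}` representative of) `I^{⌈α⌉-α} f` is an antiderivative of `φ`.
`D^0 = Id`. -/
def IsRLDeriv (b : ℝ) (α : ℝ) (f φ : ℝ → ℝ) : Prop :=
  IntegrableOn φ (Set.Icc 0 b) volume ∧
    ((α = 0 ∧ φ =ᵐ[volume.restrict (Set.Icc 0 b)] f) ∨
     (α ≠ 0 ∧ ∃ g : ℝ → ℝ,
        g =ᵐ[volume.restrict (Set.Icc 0 b)] RL ((⌈α⌉₊ : ℝ) - α) f ∧
        MemACn b ⌈α⌉₊ g ∧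
        ∀ t ∈ Set.Icc (0:ℝ) b,
          iteratedDerivWithin (⌈α⌉₊ - 1) g (Set.Icc 0 b) t =
            iteratedDerivWithin (⌈α⌉₊ - 1) g (Set.Icc 0 b) 0 + ∫ s in (0:ℝ)..t, φ s))

/-!
On `L¹[0,b]` modulo a.e. equality the fractional integrals `I^α` form a semigroup of linear
operators, and `I^α t^q` is a multiple of `t^(q+α)`. Put `B = β_n`, `α_j = B - β_j` and
`T = ∑ c_j I^{α_j}`, so that the equation reads `(1 + T) u = I^B w + f`. Let `Y` be the sum of
the range of `I^B` and the span of `t^(B-1), …, t^(B-N)`, where `N = ⌈B - β_*⌉`. The choice of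
`β_*` is exactly what makes `Y` invariant under `T`: when `α_j` is not an integer, `N < α_j + 1`,
so `I^{α_j}` maps the powers into the range of `I^B`; when it is an integer, `I^{α_j}` merely
raises the exponents in the list by that integer. Since the `α_j` are positive, some power of `T`
maps `L¹` into the range of `I^B`. Thus `T` is nilpotent modulo `Y`, and `(1 + T) u ∈ Y` forces
`u ∈ Y`. Consequently `u = I^{β_j} φ_j + p_j`, where `p_j` is a combination of
`t^(β_j-1), t^(β_j-2), …`, for every `j < n`. Such a decomposition says that `u ∈ X_{β_j}` with
`D^{β_j} u = φ_j`, and substituting it into the equation gives `u = I^B (w - ∑ c_j φ_j) + p_n`.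
-/

open scoped Convolution NNReal
open ContinuousLinearMap (mul)

section Convolution

variable {b : ℝ} {f f₁ f₂ g g₁ g₂ : ℝ → ℝ}

lemma convolution_eq_zero_of_nonpos (hf : ∀ s ≤ 0, f s = 0) (hg : ∀ s ≤ 0, g s = 0) {t : ℝ}
    (ht : t ≤ 0) : (f ⋆[mul ℝ ℝ, volume] g) t = 0 := by
  refine integral_eq_zero_of_ae (.of_forall fun s => ?_)
  rcases le_total s 0 with hs | hs
  · simp [hf s hs]
  · simp [hg (t - s) (by linarith)]

lemma convolution_congr_of_eqOn_Iic (hb : 0 ≤ b) (hf₁ : ∀ s ≤ 0, f₁ s = 0)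
    (hg₁ : ∀ s ≤ 0, g₁ s = 0) (hf : EqOn f₁ f₂ (Iic b)) (hg : EqOn g₁ g₂ (Iic b)) {t : ℝ}
    (ht : t ≤ b) : (f₁ ⋆[mul ℝ ℝ, volume] g₁) t = (f₂ ⋆[mul ℝ ℝ, volume] g₂) t := by
  refine integral_congr_ae (.of_forall fun s => ?_)
  simp only [ContinuousLinearMap.mul_apply']
  rcases le_total s 0 with hs | hs
  · rw [← hf (hs.trans hb), hf₁ s hs, zero_mul, zero_mul]
  have hts : t - s ≤ b := by linarith
  rw [← hg hts]
  rcases le_total s b with hsb | hsb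
  · rw [hf hsb]
  · rw [hg₁ (t - s) (by linarith), mul_zero, mul_zero]

lemma convolution_mul_assoc_ae {h : ℝ → ℝ} (hf : Integrable f) (hg : Integrable g)
    (hh : Integrable h) :
    (f ⋆[mul ℝ ℝ, volume] g) ⋆[mul ℝ ℝ, volume] h
      =ᵐ[volume] f ⋆[mul ℝ ℝ, volume] (g ⋆[mul ℝ ℝ, volume] h) := by
  have hgh_norm := hg.norm.integrable_convolution (mul ℝ ℝ) hh.norm
  filter_upwards [hf.norm.ae_convolution_exists (mul ℝ ℝ) hgh_norm] with t ht
  exact convolution_assoc (mul ℝ ℝ) (mul ℝ ℝ) (mul ℝ ℝ) (mul ℝ ℝ) (fun x y z => mul_assoc x y z)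
    hf.aestronglyMeasurable hg.aestronglyMeasurable hh.aestronglyMeasurable
    (hf.ae_convolution_exists (mul ℝ ℝ) hg) (hg.norm.ae_convolution_exists (mul ℝ ℝ) hh.norm) ht

end Convolution

lemma integrableOn_Icc_zero_rpow (b : ℝ) {q : ℝ} (hq : -1 < q) :
    IntegrableOn (fun t : ℝ => t ^ q) (Icc 0 b) := by
  rw [integrableOn_Icc_iff_integrableOn_Ioc]
  exact (intervalIntegral.intervalIntegrable_rpow' hq).1

lemma integrable_indicator_Ioc_of_integrableOn_Icc {b : ℝ} {f : ℝ → ℝ}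
    (hf : IntegrableOn f (Icc 0 b)) : Integrable ((Ioc 0 b).indicator f) :=
  (integrable_indicator_iff measurableSet_Ioc).2 (hf.mono_set Ioc_subset_Icc_self)

lemma indicator_Ioc_zero_of_nonpos (b : ℝ) (f : ℝ → ℝ) {s : ℝ} (hs : s ≤ 0) :
    (Ioc 0 b).indicator f s = 0 :=
  indicator_of_notMem (fun h => h.1.not_ge hs) f

lemma ae_restrict_Icc_zero_pos (b : ℝ) : ∀ᵐ t ∂volume.restrict (Icc 0 b), 0 < t := by
  rw [← restrict_Ioc_eq_restrict_Icc]
  filter_upwards [ae_restrict_mem measurableSet_Ioc] with t ht using ht.1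

lemma integral_sub_rpow_mul_rpow {p q t : ℝ} (hp : 0 < p) (hq : 0 < q) (ht : 0 < t) :
    ∫ s in (0 : ℝ)..t, (t - s) ^ (p - 1) * s ^ (q - 1) =
      Real.Gamma q * Real.Gamma p / Real.Gamma (q + p) * t ^ (q + p - 1) := by
  have real_eq_complex :
      ((∫ s in (0 : ℝ)..t, (t - s) ^ (p - 1) * s ^ (q - 1) : ℝ) : ℂ) =
        ∫ s in (0 : ℝ)..t, (s : ℂ) ^ ((q : ℂ) - 1) * ((t : ℂ) - s) ^ ((p : ℂ) - 1) := by
    rw [← intervalIntegral.integral_ofReal]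
    refine intervalIntegral.integral_congr fun s hs => ?_
    rw [uIcc_of_le ht.le] at hs
    simp only [Complex.ofReal_mul, Complex.ofReal_cpow (sub_nonneg.2 hs.2),
      Complex.ofReal_cpow hs.1, Complex.ofReal_sub, Complex.ofReal_one]
    ring
  rw [← Complex.ofReal_inj, real_eq_complex, Complex.betaIntegral_scaled _ _ ht,
    Complex.betaIntegral_eq_Gamma_mul_div _ _ (by simpa) (by simpa)]
  simp only [Complex.ofReal_mul, Complex.ofReal_div, ← Complex.Gamma_ofReal,
    Complex.ofReal_cpow ht.le, Complex.ofReal_sub, Complex.ofReal_add, Complex.ofReal_one]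
  ring

/-- The kernel `t ^ (α - 1) / Γ(α)` of the fractional integral of order `α`, cut off outside
`(0, b]`: this makes it integrable on `ℝ` and does not affect the integral on `[0, b]`. -/
noncomputable def rlKernel (b α : ℝ) : ℝ → ℝ :=
  (Ioc 0 b).indicator fun t => 1 / Real.Gamma α * t ^ (α - 1)

lemma integrable_rlKernel (b : ℝ) {α : ℝ} (hα : 0 < α) : Integrable (rlKernel b α) :=
  integrable_indicator_Ioc_of_integrableOn_Icc
    ((integrableOn_Icc_zero_rpow b (by linarith)).const_mul _)

lemma rlKernel_of_nonpos (b α : ℝ) {t : ℝ} (ht : t ≤ 0) : rlKernel b α t = 0 :=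
  indicator_Ioc_zero_of_nonpos b _ ht

lemma rlKernel_of_mem {b t : ℝ} (α : ℝ) (ht : t ∈ Ioc 0 b) :
    rlKernel b α t = 1 / Real.Gamma α * t ^ (α - 1) :=
  indicator_of_mem ht _

namespace RL

variable {b α β : ℝ} {f g : ℝ → ℝ}

lemma order_zero (f : ℝ → ℝ) : RL 0 f = f := by
  ext t
  simp [RL]

lemma order_one (f : ℝ → ℝ) : RL 1 f = fun t => ∫ s in (0 : ℝ)..t, f s := by
  ext t
  simp [RL]

lemma const_smul (α c : ℝ) (f : ℝ → ℝ) : RL α (c • f) = c • RL α f := by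
  ext t
  by_cases hα : α = 0
  · simp [RL, hα]
  · simp only [RL, if_neg hα, Pi.smul_apply, smul_eq_mul, mul_left_comm _ c,
      intervalIntegral.integral_const_mul]

lemma congr_ae (h : f =ᵐ[volume.restrict (Icc 0 b)] g) :
    RL α f =ᵐ[volume.restrict (Icc 0 b)] RL α g := by
  by_cases hα : α = 0
  · simpa only [hα, order_zero] using h
  filter_upwards [ae_restrict_mem measurableSet_Icc] with t ht
  simp only [RL, if_neg hα, intervalIntegral.integral_of_le ht.1]
  congr 1
  have hsub : Ioc 0 t ⊆ Icc 0 b := Ioc_subset_Icc_self.trans (Icc_subset_Icc_right ht.2)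
  refine integral_congr_ae ?_
  filter_upwards [ae_restrict_of_ae_restrict_of_subset hsub h] with s hs
  rw [hs]

lemma eq_convolution (hα : 0 < α) (f : ℝ → ℝ) {t : ℝ} (ht : t ∈ Icc 0 b) :
    RL α f t = ((Ioc 0 b).indicator f ⋆[mul ℝ ℝ, volume] rlKernel b α) t := by
  have integrand_eq :
      (fun s => mul ℝ ℝ ((Ioc 0 b).indicator f s) (rlKernel b α (t - s))) =
        (Ioo 0 t).indicator fun s => 1 / Real.Gamma α * ((t - s) ^ (α - 1) * f s) := by
    ext s
    rw [ContinuousLinearMap.mul_apply']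
    rcases le_or_gt s 0 with hs₀ | hs₀
    · rw [indicator_Ioc_zero_of_nonpos b f hs₀, zero_mul,
        indicator_of_notMem fun h => h.1.not_ge hs₀]
    rcases le_or_gt t s with hts | hts
    · rw [rlKernel_of_nonpos b α (sub_nonpos.2 hts), mul_zero,
        indicator_of_notMem fun h => h.2.not_ge hts]
    · rw [indicator_of_mem (show s ∈ Ioc 0 b from ⟨hs₀, hts.le.trans ht.2⟩),
        rlKernel_of_mem α ⟨by linarith, by linarith [ht.2]⟩,
        indicator_of_mem (show s ∈ Ioo 0 t from ⟨hs₀, hts⟩)]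
      ring
  rw [convolution_def, integrand_eq, integral_indicator measurableSet_Ioo,
    ← integral_Ioc_eq_integral_Ioo, ← intervalIntegral.integral_of_le ht.1,
    intervalIntegral.integral_const_mul, RL, if_neg hα.ne']

lemma integrableOn (hα : 0 ≤ α) (hf : IntegrableOn f (Icc 0 b)) :
    IntegrableOn (RL α f) (Icc 0 b) := by
  rcases hα.eq_or_lt with rfl | hα
  · rwa [order_zero]
  have hconv := (integrable_indicator_Ioc_of_integrableOn_Icc hf).integrable_convolution
    (mul ℝ ℝ) (integrable_rlKernel b hα)
  exact hconv.integrableOn.congr_fun (fun t ht => (eq_convolution hα f ht).symm) measurableSet_Icc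

lemma add_ae (hα : 0 ≤ α) (hf : IntegrableOn f (Icc 0 b)) (hg : IntegrableOn g (Icc 0 b)) :
    RL α (f + g) =ᵐ[volume.restrict (Icc 0 b)] RL α f + RL α g := by
  rcases hα.eq_or_lt with rfl | hα
  · simp only [order_zero, EventuallyEq.refl]
  have exists_conv {h : ℝ → ℝ} (hh : IntegrableOn h (Icc 0 b)) :
      ∀ᵐ t ∂volume.restrict (Icc 0 b), ConvolutionExistsAt ((Ioc 0 b).indicator h)
        (rlKernel b α) t (mul ℝ ℝ) volume :=
    ae_restrict_of_ae ((integrable_indicator_Ioc_of_integrableOn_Icc hh).ae_convolution_exists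
      (mul ℝ ℝ) (integrable_rlKernel b hα))
  filter_upwards [ae_restrict_mem measurableSet_Icc, exists_conv hf, exists_conv hg]
    with t ht hft hgt
  rw [Pi.add_apply, eq_convolution hα _ ht, eq_convolution hα f ht, eq_convolution hα g ht,
    indicator_add', hft.add_distrib hgt]

lemma rpow {q t : ℝ} (hα : 0 ≤ α) (hq : -1 < q) (ht : 0 < t) :
    RL α (fun s => s ^ q) t = Real.Gamma (q + 1) / Real.Gamma (q + 1 + α) * t ^ (q + α) := by
  rcases hα.eq_or_lt with rfl | hα
  · simp [order_zero, (Real.Gamma_pos_of_pos (show 0 < q + 1 by linarith)).ne']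
  have hΓ := (Real.Gamma_pos_of_pos hα).ne'
  have beta := integral_sub_rpow_mul_rpow hα (show 0 < q + 1 by linarith) ht
  simp only [add_sub_cancel_right, show q + 1 + α - 1 = q + α by ring] at beta
  rw [RL, if_neg hα.ne', beta]
  field_simp

lemma indicator_eqOn_convolution (b : ℝ) (hα : 0 < α) (f : ℝ → ℝ) :
    EqOn ((Ioc 0 b).indicator (RL α f))
      ((Ioc 0 b).indicator f ⋆[mul ℝ ℝ, volume] rlKernel b α) (Iic b) := by
  intro t ht
  rcases le_or_gt t 0 with h | h
  · rw [indicator_Ioc_zero_of_nonpos b _ h, convolution_eq_zero_of_nonpos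
      (fun _ => indicator_Ioc_zero_of_nonpos b f) (fun _ => rlKernel_of_nonpos b α) h]
  · rw [indicator_of_mem (show t ∈ Ioc 0 b from ⟨h, ht⟩), eq_convolution hα f ⟨h.le, ht⟩]

end RL

lemma rlKernel_convolution_rlKernel (b : ℝ) {α β : ℝ} (hα : 0 < α) (hβ : 0 < β) :
    EqOn (rlKernel b β ⋆[mul ℝ ℝ, volume] rlKernel b α) (rlKernel b (α + β)) (Iic b) := by
  intro t ht
  rcases le_or_gt t 0 with h | h
  · rw [rlKernel_of_nonpos b _ h, convolution_eq_zero_of_nonpos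
      (fun _ => rlKernel_of_nonpos b β) (fun _ => rlKernel_of_nonpos b α) h]
  have hΓ := (Real.Gamma_pos_of_pos hβ).ne'
  have hrpow := RL.rpow hα.le (show -1 < β - 1 by linarith) h
  calc (rlKernel b β ⋆[mul ℝ ℝ, volume] rlKernel b α) t
      = RL α ((1 / Real.Gamma β) • fun s => s ^ (β - 1)) t := by
        rw [RL.eq_convolution hα _ ⟨h.le, ht⟩]
        rfl
    _ = 1 / Real.Gamma (α + β) * t ^ (α + β - 1) := by
        rw [RL.const_smul, Pi.smul_apply, hrpow, sub_add_cancel, smul_eq_mul, add_comm β α,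
          show β - 1 + α = α + β - 1 by ring]
        field_simp
    _ = rlKernel b (α + β) t := (rlKernel_of_mem _ ⟨h, ht⟩).symm

lemma RL.comp_ae {b α β : ℝ} {f : ℝ → ℝ} (hα : 0 ≤ α) (hβ : 0 ≤ β)
    (hf : IntegrableOn f (Icc 0 b)) :
    RL α (RL β f) =ᵐ[volume.restrict (Icc 0 b)] RL (α + β) f := by
  rcases hα.eq_or_lt with rfl | hα
  · rw [order_zero, zero_add]
  rcases hβ.eq_or_lt with rfl | hβ
  · rw [order_zero, add_zero]
  have assoc := ae_restrict_of_ae (s := Icc 0 b) <|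
    convolution_mul_assoc_ae (integrable_indicator_Ioc_of_integrableOn_Icc hf)
      (integrable_rlKernel b hβ) (integrable_rlKernel b hα)
  filter_upwards [ae_restrict_mem measurableSet_Icc, assoc] with t ht assoc_t
  have hb : 0 ≤ b := ht.1.trans ht.2
  calc RL α (RL β f) t
      = ((Ioc 0 b).indicator (RL β f) ⋆[mul ℝ ℝ, volume] rlKernel b α) t :=
        eq_convolution hα _ ht
    _ = (((Ioc 0 b).indicator f ⋆[mul ℝ ℝ, volume] rlKernel b β)
          ⋆[mul ℝ ℝ, volume] rlKernel b α) t :=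
        convolution_congr_of_eqOn_Iic hb (fun _ => indicator_Ioc_zero_of_nonpos b _)
          (fun _ => rlKernel_of_nonpos b α) (indicator_eqOn_convolution b hβ f) (eqOn_refl _ _) ht.2
    _ = ((Ioc 0 b).indicator f ⋆[mul ℝ ℝ, volume]
          (rlKernel b β ⋆[mul ℝ ℝ, volume] rlKernel b α)) t := assoc_t
    _ = ((Ioc 0 b).indicator f ⋆[mul ℝ ℝ, volume] rlKernel b (α + β)) t :=
        (convolution_congr_of_eqOn_Iic hb (fun _ => indicator_Ioc_zero_of_nonpos b f)
          (fun _ => rlKernel_of_nonpos b _) (eqOn_refl _ _)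
          (rlKernel_convolution_rlKernel b hα hβ).symm ht.2).symm
    _ = RL (α + β) f t := (eq_convolution (add_pos hα hβ) f ht).symm

/-- `L¹[0,b]` modulo a.e. equality: on it the fractional integrals are linear and satisfy the
semigroup law exactly, while on functions both hold only almost everywhere. -/
abbrev L1Icc (b : ℝ) : Type := ℝ →₁[volume.restrict (Icc 0 b)] ℝ

lemma integrable_RL_coeFn {b : ℝ} (α : ℝ≥0) (F : L1Icc b) :
    Integrable (RL α F) (volume.restrict (Icc 0 b)) :=
  RL.integrableOn α.coe_nonneg (L1.integrable_coeFn F)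

/-- The Riemann–Liouville integral of order `α` as a linear operator on `L¹[0,b]`. -/
noncomputable def rlL1 (b : ℝ) (α : ℝ≥0) : L1Icc b →ₗ[ℝ] L1Icc b where
  toFun F := (integrable_RL_coeFn α F).toL1
  map_add' F G := by
    rw [← Integrable.toL1_add, Integrable.toL1_eq_toL1_iff]
    exact (RL.congr_ae (Lp.coeFn_add F G)).trans
      (RL.add_ae α.coe_nonneg (L1.integrable_coeFn F) (L1.integrable_coeFn G))
  map_smul' c F := by
    rw [RingHom.id_apply, ← Integrable.toL1_smul', Integrable.toL1_eq_toL1_iff]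
    exact (RL.congr_ae (Lp.coeFn_smul c F)).trans (by rw [RL.const_smul])

/-- The class of `t ↦ t ^ q` in `L¹[0,b]`; it is `0` when `q ≤ -1`, where the power fails to be
integrable. -/
noncomputable def rpowL1 (b q : ℝ) : L1Icc b :=
  if hq : -1 < q then (integrableOn_Icc_zero_rpow b hq).toL1 else 0

/-- The span of `t ^ (γ - 1), …, t ^ (γ - N)` in `L¹[0,b]`, without the nonintegrable powers. For
`N = ⌈γ⌉` it consists of the functions whose fractional derivative of order `γ` vanishes. -/
noncomputable def powSpan (b γ : ℝ) (N : ℕ) : Submodule ℝ (L1Icc b) :=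
  Submodule.span ℝ ((fun k : ℕ => rpowL1 b (γ - k)) '' Icc 1 N)

section RLOperator

variable {b : ℝ}

lemma rlL1_ae_eq {α : ℝ≥0} {F : L1Icc b} {f : ℝ → ℝ} (h : F =ᵐ[volume.restrict (Icc 0 b)] f) :
    rlL1 b α F =ᵐ[volume.restrict (Icc 0 b)] RL α f :=
  (integrable_RL_coeFn α F).coeFn_toL1.trans (RL.congr_ae h)

lemma rlL1_zero (F : L1Icc b) : rlL1 b 0 F = F :=
  Lp.ext (by simpa only [NNReal.coe_zero, RL.order_zero] using rlL1_ae_eq (α := 0) (ae_eq_refl F))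

lemma rlL1_add (α β : ℝ≥0) (F : L1Icc b) : rlL1 b (α + β) F = rlL1 b α (rlL1 b β F) := by
  refine Lp.ext ((rlL1_ae_eq (ae_eq_refl F)).trans ?_)
  rw [NNReal.coe_add]
  exact ((rlL1_ae_eq (rlL1_ae_eq (ae_eq_refl F))).trans
    (RL.comp_ae α.coe_nonneg β.coe_nonneg (L1.integrable_coeFn F))).symm

lemma range_rlL1_antitone (b : ℝ) : Antitone fun α => LinearMap.range (rlL1 b α) := by
  rintro α β hαβ _ ⟨F, rfl⟩
  refine ⟨rlL1 b (β - α) F, ?_⟩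
  rw [← rlL1_add, add_tsub_cancel_of_le hαβ]

lemma rlL1_mem_range_add {α γ : ℝ≥0} {F : L1Icc b} (hF : F ∈ LinearMap.range (rlL1 b γ)) :
    rlL1 b α F ∈ LinearMap.range (rlL1 b (α + γ)) := by
  obtain ⟨G, rfl⟩ := hF
  exact ⟨G, rlL1_add α γ G⟩

lemma rpowL1_ae_eq {q : ℝ} (hq : -1 < q) :
    rpowL1 b q =ᵐ[volume.restrict (Icc 0 b)] fun t => t ^ q := by
  rw [rpowL1, dif_pos hq]
  exact Integrable.coeFn_toL1 _

lemma rpowL1_of_le {q : ℝ} (hq : q ≤ -1) : rpowL1 b q = 0 :=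
  dif_neg hq.not_gt

lemma rlL1_rpowL1 (α : ℝ≥0) {q : ℝ} (hq : -1 < q) :
    rlL1 b α (rpowL1 b q) =
      (Real.Gamma (q + 1) / Real.Gamma (q + 1 + α)) • rpowL1 b (q + α) := by
  have hqα : -1 < q + α := by linarith [α.coe_nonneg]
  refine Lp.ext ((rlL1_ae_eq (rpowL1_ae_eq hq)).trans (.trans ?_ (Lp.coeFn_smul _ _).symm))
  filter_upwards [ae_restrict_Icc_zero_pos b, rpowL1_ae_eq hqα] with t ht hpow
  rw [RL.rpow α.coe_nonneg hq ht, Pi.smul_apply, hpow, smul_eq_mul]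

lemma rpowL1_mem_range_rlL1 {α : ℝ≥0} {q : ℝ} (hq : (α : ℝ) - 1 < q) :
    rpowL1 b q ∈ LinearMap.range (rlL1 b α) := by
  have hint := rlL1_rpowL1 (b := b) α (show -1 < q - α by linarith)
  rw [sub_add_cancel] at hint
  have hΓ : Real.Gamma (q - α + 1) / Real.Gamma (q - α + 1 + α) ≠ 0 :=
    (div_pos (Real.Gamma_pos_of_pos (by linarith))
      (Real.Gamma_pos_of_pos (by linarith [α.coe_nonneg]))).ne'
  exact (Submodule.smul_mem_iff _ hΓ).1 (hint ▸ LinearMap.mem_range_self _ _)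

lemma rpowL1_mem_powSpan {γ : ℝ} {N k : ℕ} (hk : k ∈ Icc 1 N) :
    rpowL1 b (γ - k) ∈ powSpan b γ N :=
  Submodule.subset_span (mem_image_of_mem _ hk)

lemma rlL1_mem_powSpan (α : ℝ≥0) {γ : ℝ} {N : ℕ} {F : L1Icc b} (hF : F ∈ powSpan b γ N) :
    rlL1 b α F ∈ powSpan b (α + γ) N := by
  suffices powSpan b γ N ≤ (powSpan b (α + γ) N).comap (rlL1 b α) from this hF
  refine Submodule.span_le.2 ?_
  rintro _ ⟨k, hk, rfl⟩
  simp only [SetLike.mem_coe, Submodule.mem_comap]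
  rcases le_or_gt (γ - k) (-1) with hq | hq
  · rw [rpowL1_of_le hq, map_zero]
    exact zero_mem _
  · rw [rlL1_rpowL1 α hq, show γ - k + α = α + γ - k by ring]
    exact Submodule.smul_mem _ _ (rpowL1_mem_powSpan hk)

lemma powSpan_zero (b : ℝ) (N : ℕ) : powSpan b 0 N = ⊥ := by
  refine Submodule.span_eq_bot.2 ?_
  rintro _ ⟨k, hk, rfl⟩
  have : (1 : ℝ) ≤ k := by exact_mod_cast hk.1
  exact rpowL1_of_le (by linarith)

-- If `α` is an integer, then `t ^ (α + β - k) = t ^ (β - (k - α))` for `k > α`; all other powers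
-- have exponent greater than `β - 1`.
lemma powSpan_add_le_range_sup_powSpan {α β : ℝ≥0} {N : ℕ}
    (hN : (∃ m : ℕ, (α : ℝ) = m) ∨ (N : ℝ) < α + 1) :
    powSpan b (α + β) N ≤ LinearMap.range (rlL1 b β) ⊔ powSpan b β N := by
  refine Submodule.span_le.2 ?_
  rintro _ ⟨k, hk, rfl⟩
  have hkN : (k : ℝ) ≤ N := by exact_mod_cast hk.2
  have small_index (hkα : (k : ℝ) < α + 1) :
      rpowL1 b (α + β - k) ∈ LinearMap.range (rlL1 b β) ⊔ powSpan b β N :=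
    Submodule.mem_sup_left (rpowL1_mem_range_rlL1 (by linarith))
  rcases hN with ⟨m, hm⟩ | hN
  · rcases le_or_gt k m with hkm | hkm
    · have : (k : ℝ) ≤ m := by exact_mod_cast hkm
      exact small_index (by linarith)
    · have hexp : (α : ℝ) + β - k = β - (k - m : ℕ) := by
        rw [Nat.cast_sub hkm.le, hm]
        ring
      have hmem : k - m ∈ Icc 1 N := ⟨by lia, (Nat.sub_le k m).trans hk.2⟩
      simp only [SetLike.mem_coe, hexp]
      exact Submodule.mem_sup_right (rpowL1_mem_powSpan hmem)
  · exact small_index (by linarith)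

end RLOperator

-- Modulo `p`, `x = -T x = T ^ 2 x = ⋯ = ± T ^ m x`.
lemma mem_of_add_apply_mem_of_pow_apply_mem {R M : Type*} [Ring R] [AddCommGroup M] [Module R M]
    {p : Submodule R M} {T : Module.End R M} (hT : ∀ y ∈ p, T y ∈ p) {x : M}
    (hx : x + T x ∈ p) {m : ℕ} (hm : (T ^ m) x ∈ p) : x ∈ p := by
  induction m with
  | zero => simpa using hm
  | succ m ih =>
    have hsum : (T ^ m) (x + T x) ∈ p := by
      rw [Module.End.pow_apply]
      exact MapsTo.iterate (s := (p : Set M)) hT m hx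
    rw [map_add, ← Module.End.mul_apply, ← pow_succ] at hsum
    exact ih ((p.add_mem_iff_left hm).1 hsum)

/-- The operator `∑ c_j I^{α_j}` on `L¹[0,b]`. -/
noncomputable def rlComb {ι : Type*} (b : ℝ) (s : Finset ι) (c : ι → ℝ) (α : ι → ℝ≥0) :
    Module.End ℝ (L1Icc b) :=
  ∑ j ∈ s, c j • rlL1 b (α j)

section IntegralEquation

variable {ι : Type*} {b : ℝ} {s : Finset ι} {c : ι → ℝ} {α β : ι → ℝ≥0} {B : ℝ≥0} {N : ℕ}

lemma rlComb_apply (F : L1Icc b) : rlComb b s c α F = ∑ j ∈ s, c j • rlL1 b (α j) F := by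
  simp only [rlComb, LinearMap.sum_apply, LinearMap.smul_apply]

lemma rlComb_mem {p : Submodule ℝ (L1Icc b)} {F : L1Icc b}
    (h : ∀ j ∈ s, rlL1 b (α j) F ∈ p) : rlComb b s c α F ∈ p := by
  rw [rlComb_apply]
  exact p.sum_mem fun j hj => p.smul_mem _ (h j hj)

lemma rlComb_pow_mem_range {δ : ℝ≥0} (hδ : ∀ j ∈ s, δ ≤ α j) (m : ℕ) (F : L1Icc b) :
    (rlComb b s c α ^ m) F ∈ LinearMap.range (rlL1 b (m * δ)) := by
  induction m with
  | zero => exact ⟨F, by simp [rlL1_zero]⟩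
  | succ m ih =>
    rw [pow_succ', Module.End.mul_apply]
    refine rlComb_mem fun j hj => range_rlL1_antitone b ?_ (rlL1_mem_range_add ih)
    push_cast
    rw [add_one_mul, add_comm]
    gcongr
    exact hδ j hj

lemma exists_rlComb_pow_mem_range (hα : ∀ j ∈ s, 0 < α j) (B : ℝ≥0) :
    ∃ m : ℕ, ∀ F : L1Icc b, (rlComb b s c α ^ m) F ∈ LinearMap.range (rlL1 b B) := by
  obtain ⟨δ, hδ, hδα⟩ : ∃ δ : ℝ≥0, 0 < δ ∧ ∀ j ∈ s, δ ≤ α j := by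
    rcases s.eq_empty_or_nonempty with rfl | hs
    · exact ⟨1, one_pos, by simp⟩
    · obtain ⟨i, hi, hmin⟩ := s.exists_min_image α hs
      exact ⟨α i, hα i hi, hmin⟩
  obtain ⟨m, hm⟩ := exists_nat_ge (B / δ)
  exact ⟨m, fun F => range_rlL1_antitone b ((div_le_iff₀ hδ).1 hm)
    (rlComb_pow_mem_range hδα m F)⟩

lemma rlComb_mem_range_sup_powSpan (hαβ : ∀ j ∈ s, α j + β j = B)
    (hN : ∀ j ∈ s, (∃ m : ℕ, (α j : ℝ) = m) ∨ (N : ℝ) < α j + 1) {F : L1Icc b}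
    (hF : F ∈ LinearMap.range (rlL1 b B) ⊔ powSpan b B N) :
    rlComb b s c α F ∈ LinearMap.range (rlL1 b B) ⊔ powSpan b B N := by
  obtain ⟨G, hG, P, hP, rfl⟩ := Submodule.mem_sup.1 hF
  rw [map_add]
  refine add_mem (Submodule.mem_sup_left ?_) (rlComb_mem fun j hj => ?_)
  · exact rlComb_mem fun j _ => range_rlL1_antitone b le_add_self (rlL1_mem_range_add hG)
  · rw [← hαβ j hj, NNReal.coe_add] at hP ⊢
    obtain ⟨H, hH, Q, hQ, rfl⟩ := Submodule.mem_sup.1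
      (powSpan_add_le_range_sup_powSpan (hN j hj) hP)
    rw [map_add]
    exact Submodule.add_mem_sup (rlL1_mem_range_add hH) (rlL1_mem_powSpan _ hQ)

lemma mem_range_sup_powSpan_of_add_rlComb_eq (hαβ : ∀ j ∈ s, α j + β j = B)
    (hα : ∀ j ∈ s, 0 < α j) (hN : ∀ j ∈ s, (∃ m : ℕ, (α j : ℝ) = m) ∨ (N : ℝ) < α j + 1)
    {U W F : L1Icc b} (hF : F ∈ powSpan b B N)
    (heq : U + rlComb b s c α U = rlL1 b B W + F) :
    U ∈ LinearMap.range (rlL1 b B) ⊔ powSpan b B N := by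
  obtain ⟨m, hm⟩ := exists_rlComb_pow_mem_range (b := b) (c := c) hα B
  refine mem_of_add_apply_mem_of_pow_apply_mem
    (fun _ => rlComb_mem_range_sup_powSpan hαβ hN) ?_ (Submodule.mem_sup_left (hm U))
  rw [heq]
  exact Submodule.add_mem_sup (LinearMap.mem_range_self _ W) hF

lemma exists_sub_rlL1_mem_powSpan_of_add_rlComb_eq (hαβ : ∀ j ∈ s, α j + β j = B)
    (hα : ∀ j ∈ s, 0 < α j) (hN : ∀ j ∈ s, (∃ m : ℕ, (α j : ℝ) = m) ∨ (N : ℝ) < α j + 1)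
    {U W F : L1Icc b} (hF : F ∈ powSpan b B N)
    (heq : U + rlComb b s c α U = rlL1 b B W + F) :
    ∃ Φ : ι → L1Icc b, (∀ j ∈ s, U - rlL1 b (β j) (Φ j) ∈ powSpan b (β j) N) ∧
      U - rlL1 b B (W - ∑ j ∈ s, c j • Φ j) ∈ powSpan b B N := by
  have hU := mem_range_sup_powSpan_of_add_rlComb_eq hαβ hα hN hF heq
  have lower_order : ∀ j ∈ s, ∃ Φ, U - rlL1 b (β j) Φ ∈ powSpan b (β j) N := by
    intro j hj
    have hβB : β j ≤ B := hαβ j hj ▸ le_add_self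
    have hpow := powSpan_add_le_range_sup_powSpan (b := b) (β := β j) (hN j hj)
    rw [← NNReal.coe_add, hαβ j hj] at hpow
    obtain ⟨_, ⟨Φ, rfl⟩, P, hP, hΦP⟩ := Submodule.mem_sup.1
      (sup_le ((range_rlL1_antitone b hβB).trans le_sup_left) hpow hU)
    exact ⟨Φ, by rwa [← hΦP, add_sub_cancel_left]⟩
  choose! Φ hΦ using lower_order
  refine ⟨Φ, hΦ, ?_⟩
  have hcomm (j) (hj : j ∈ s) :
      rlL1 b (α j) U - rlL1 b B (Φ j) = rlL1 b (α j) (U - rlL1 b (β j) (Φ j)) := by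
    rw [map_sub, ← rlL1_add, hαβ j hj]
  have hsplit : U - rlL1 b B (W - ∑ j ∈ s, c j • Φ j) =
      F - ∑ j ∈ s, c j • (rlL1 b (α j) U - rlL1 b B (Φ j)) := by
    rw [rlComb_apply] at heq
    simp only [map_sub, map_sum, map_smul, smul_sub, Finset.sum_sub_distrib]
    rw [← sub_eq_iff_eq_add'.2 heq]
    abel
  rw [hsplit]
  refine sub_mem hF (sum_mem fun j hj => Submodule.smul_mem _ _ ?_)
  rw [hcomm j hj, ← hαβ j hj, NNReal.coe_add]
  exact rlL1_mem_powSpan _ (hΦ j hj)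

end IntegralEquation

section Polynomial

open Polynomial

lemma iteratedDeriv_polynomial_eval (P : ℝ[X]) (m : ℕ) :
    iteratedDeriv m (fun t => P.eval t) = fun t => (derivative^[m] P).eval t := by
  induction m with
  | zero => simp
  | succ m ih =>
    ext t
    rw [iteratedDeriv_succ, ih, Polynomial.deriv, Function.iterate_succ_apply']

lemma contDiff_polynomial_eval (P : ℝ[X]) (m : ℕ) : ContDiff ℝ m fun t => P.eval t := by
  simpa only [coe_aeval_eq_eval] using P.contDiff_aeval (𝕜 := ℝ) m

lemma exists_iteratedDerivWithin_polynomial_eval_eq {b : ℝ} (hb : 0 < b) {P : ℝ[X]} {m : ℕ}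
    (hP : P.natDegree ≤ m) :
    ∃ C : ℝ, ∀ t ∈ Icc 0 b, iteratedDerivWithin m (fun t => P.eval t) (Icc 0 b) t = C := by
  have hdeg : (derivative^[m] P).natDegree = 0 :=
    Nat.le_zero.1 ((natDegree_iterate_derivative P m).trans (Nat.sub_eq_zero_of_le hP).le)
  obtain ⟨C, hC⟩ := natDegree_eq_zero.1 hdeg
  refine ⟨C, fun t ht => ?_⟩
  rw [iteratedDerivWithin_eq_iteratedDeriv (uniqueDiffOn_Icc hb)
    (contDiff_polynomial_eval P m).contDiffAt ht, iteratedDeriv_polynomial_eval, ← hC]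
  exact eval_C

lemma exists_polynomial_ae_eq_of_mem_powSpan {b : ℝ} {m N : ℕ} {F : L1Icc b}
    (hF : F ∈ powSpan b (m + 1 : ℕ) N) :
    ∃ P : ℝ[X], P.natDegree ≤ m ∧ F =ᵐ[volume.restrict (Icc 0 b)] fun t => P.eval t := by
  induction hF using Submodule.span_induction with
  | mem _ hx =>
    obtain ⟨k, hk, rfl⟩ := hx
    rcases le_or_gt k (m + 1) with hkm | hkm
    · refine ⟨X ^ (m + 1 - k), (natDegree_X_pow_le _).trans (by have := hk.1; lia), ?_⟩
      have hexp : ((m + 1 : ℕ) : ℝ) - k = (m + 1 - k : ℕ) := (Nat.cast_sub hkm).symm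
      have hpow : (-1 : ℝ) < (m + 1 - k : ℕ) := neg_one_lt_zero.trans_le (Nat.cast_nonneg _)
      simpa only [hexp, Real.rpow_natCast, eval_X_pow] using rpowL1_ae_eq (b := b) hpow
    · have : ((m + 1 : ℕ) : ℝ) + 1 ≤ k := by exact_mod_cast hkm
      have hpow : rpowL1 b ((m + 1 : ℕ) - k) = 0 := rpowL1_of_le (by linarith)
      refine ⟨0, by simp, ?_⟩
      simpa only [hpow, eval_zero, Pi.zero_def] using Lp.coeFn_zero ℝ 1 (volume.restrict (Icc 0 b))
  | zero =>
    exact ⟨0, by simp, by simpa only [eval_zero, Pi.zero_def] using Lp.coeFn_zero ℝ 1 _⟩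
  | add F G _ _ ihF ihG =>
    obtain ⟨P, hP, hFP⟩ := ihF
    obtain ⟨Q, hQ, hGQ⟩ := ihG
    refine ⟨P + Q, natDegree_add_le_of_degree_le hP hQ, ?_⟩
    simpa only [eval_add, Pi.add_def] using (Lp.coeFn_add F G).trans (hFP.add hGQ)
  | smul c F _ ihF =>
    obtain ⟨P, hP, hFP⟩ := ihF
    refine ⟨c • P, (natDegree_smul_le c P).trans hP, ?_⟩
    simpa only [eval_smul, Pi.smul_def] using (Lp.coeFn_smul c F).trans (hFP.const_smul c)

end Polynomial

section IterateRL

variable {b : ℝ} {φ : ℝ → ℝ}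

lemma RL.iterate_order_one_ae (hφ : IntegrableOn φ (Icc 0 b)) (m : ℕ) :
    (RL 1)^[m] φ =ᵐ[volume.restrict (Icc 0 b)] RL m φ := by
  induction m with
  | zero => simp only [Function.iterate_zero, id, Nat.cast_zero, order_zero, EventuallyEq.refl]
  | succ m ih =>
    rw [Function.iterate_succ_apply', Nat.cast_succ, add_comm]
    exact (congr_ae ih).trans (comp_ae zero_le_one m.cast_nonneg hφ)

lemma RL.continuousOn_order_one (hφ : IntegrableOn φ (Icc 0 b)) :
    ContinuousOn (RL 1 φ) (Icc 0 b) := by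
  rw [order_one]
  rcases lt_or_ge b 0 with hb | hb
  · simp [Icc_eq_empty hb.not_ge]
  · rw [← uIcc_of_le hb] at hφ ⊢
    exact intervalIntegral.continuousOn_primitive_interval hφ

lemma RL.hasDerivWithinAt_order_one (hφ : ContinuousOn φ (Icc 0 b)) {t : ℝ} (ht : t ∈ Icc 0 b) :
    HasDerivWithinAt (RL 1 φ) (φ t) (Icc 0 b) t := by
  have : Fact (t ∈ Icc 0 b) := ⟨ht⟩
  rw [order_one]
  exact intervalIntegral.integral_hasDerivWithinAt_right
    ((hφ.mono (Icc_subset_Icc_right ht.2)).intervalIntegrable_of_Icc ht.1)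
    (hφ.stronglyMeasurableAtFilter_nhdsWithin measurableSet_Icc t) (hφ t ht)

lemma RL.contDiffOn_iterate_order_one (hb : 0 < b) (hφ : IntegrableOn φ (Icc 0 b)) (m : ℕ) :
    ContDiffOn ℝ m ((RL 1)^[m + 1] φ) (Icc 0 b) := by
  have hunique := uniqueDiffOn_Icc hb
  induction m with
  | zero => simpa using continuousOn_order_one hφ
  | succ m ih =>
    have hderiv {t} (ht : t ∈ Icc 0 b) := hasDerivWithinAt_order_one ih.continuousOn ht
    rw [Function.iterate_succ_apply', Nat.cast_succ, contDiffOn_succ_iff_derivWithin hunique]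
    exact ⟨fun t ht => (hderiv ht).differentiableWithinAt, by simp,
      ih.congr fun t ht => (hderiv ht).derivWithin (hunique t ht)⟩

lemma RL.iteratedDerivWithin_iterate_order_one (hb : 0 < b) (hφ : IntegrableOn φ (Icc 0 b))
    (m : ℕ) : EqOn (iteratedDerivWithin m ((RL 1)^[m + 1] φ) (Icc 0 b)) (RL 1 φ) (Icc 0 b) := by
  induction m with
  | zero => simp [EqOn]
  | succ m ih =>
    have hderiv : EqOn (derivWithin ((RL 1)^[m + 2] φ) (Icc 0 b)) ((RL 1)^[m + 1] φ) (Icc 0 b) := by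
      intro t ht
      rw [Function.iterate_succ_apply']
      exact (hasDerivWithinAt_order_one (contDiffOn_iterate_order_one hb hφ m).continuousOn
        ht).derivWithin (uniqueDiffOn_Icc hb t ht)
    rw [iteratedDerivWithin_succ']
    exact (iteratedDerivWithin_congr hderiv).trans ih

end IterateRL

section Derivative

open Polynomial

variable {b : ℝ} {u φ : ℝ → ℝ}

lemma IsRLDeriv.memX {γ : ℝ} (h : IsRLDeriv b γ u φ) (hu : IntegrableOn u (Icc 0 b)) :
    MemX b γ u := by
  refine ⟨hu, fun hγ => ?_⟩
  obtain ⟨hγ₀, _⟩ | ⟨_, g, hg, hAC, _⟩ := h.2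
  · exact absurd hγ₀ hγ
  · exact ⟨g, hg, hAC⟩

lemma isRLDeriv_of_RL_ae_eq {γ : ℝ} {m : ℕ} {P : ℝ[X]} (hb : 0 < b) (hγ : ⌈γ⌉₊ = m + 1)
    (hφ : IntegrableOn φ (Icc 0 b)) (hP : P.natDegree ≤ m)
    (h : RL (⌈γ⌉₊ - γ) u =ᵐ[volume.restrict (Icc 0 b)]
      RL (m + 1 : ℕ) φ + fun t => P.eval t) :
    IsRLDeriv b γ u φ := by
  have hγ₀ : γ ≠ 0 := by
    rintro rfl
    simp at hγ
  set g : ℝ → ℝ := (RL 1)^[m + 1] φ + fun t => P.eval t with hg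
  have hsmooth := RL.contDiffOn_iterate_order_one hb hφ m
  have hPsmooth := (contDiff_polynomial_eval P m).contDiffOn (s := Icc 0 b)
  obtain ⟨C, hC⟩ := exists_iteratedDerivWithin_polynomial_eval_eq hb hP
  have hderiv : ∀ t ∈ Icc 0 b, iteratedDerivWithin m g (Icc 0 b) t = (∫ s in 0..t, φ s) + C := by
    intro t ht
    rw [hg, iteratedDerivWithin_add ht (uniqueDiffOn_Icc hb) (hsmooth t ht) (hPsmooth t ht),
      hC t ht, RL.iteratedDerivWithin_iterate_order_one hb hφ m ht, RL.order_one]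
  have hprim : ∀ t ∈ Icc 0 b, iteratedDerivWithin m g (Icc 0 b) t =
      iteratedDerivWithin m g (Icc 0 b) 0 + ∫ s in 0..t, φ s := by
    intro t ht
    rw [hderiv t ht, hderiv 0 ⟨le_rfl, hb.le⟩, intervalIntegral.integral_same]
    ring
  refine ⟨hφ, .inr ⟨hγ₀, g, ?_, ?_, ?_⟩⟩
  · exact ((RL.iterate_order_one_ae hφ (m + 1)).add (ae_eq_refl _)).trans h.symm
  · rw [hγ, MemACn, Nat.add_sub_cancel]
    exact ⟨hsmooth.add hPsmooth, φ, hφ, hprim⟩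
  · rwa [hγ, Nat.add_sub_cancel]

lemma isRLDeriv_of_sub_rlL1_mem_powSpan {γ : ℝ≥0} {N : ℕ} {U Φ : L1Icc b} (hb : 0 < b)
    (hU : U =ᵐ[volume.restrict (Icc 0 b)] u) (hΦ : Φ =ᵐ[volume.restrict (Icc 0 b)] φ)
    (h : U - rlL1 b γ Φ ∈ powSpan b γ N) : IsRLDeriv b γ u φ := by
  have hφ : IntegrableOn φ (Icc 0 b) := (L1.integrable_coeFn Φ).congr hΦ
  rcases eq_zero_or_pos γ with rfl | hγ
  · rw [NNReal.coe_zero, powSpan_zero, Submodule.mem_bot, rlL1_zero, sub_eq_zero] at h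
    exact ⟨hφ, .inl ⟨rfl, hΦ.symm.trans (h ▸ hU)⟩⟩
  obtain ⟨m, hm⟩ := Nat.exists_eq_add_one_of_ne_zero (Nat.ceil_pos.2 (NNReal.coe_pos.2 hγ)).ne'
  have hγm : γ ≤ (m + 1 : ℕ) := by exact_mod_cast hm ▸ Nat.le_ceil (γ : ℝ)
  obtain ⟨δ, hδ⟩ := exists_add_of_le hγm
  have hδγ : (δ : ℝ) = ⌈(γ : ℝ)⌉₊ - γ := by
    rw [hm, eq_sub_iff_add_eq']
    exact_mod_cast hδ.symm
  obtain ⟨P, hP, hFP⟩ : ∃ P : ℝ[X], P.natDegree ≤ m ∧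
      ⇑(rlL1 b δ U - rlL1 b (m + 1 : ℕ) Φ) =ᵐ[volume.restrict (Icc 0 b)] fun t => P.eval t := by
    have hmem := rlL1_mem_powSpan δ h
    rw [map_sub, ← rlL1_add, ← NNReal.coe_add, add_comm δ γ, ← hδ, NNReal.coe_natCast] at hmem
    exact exists_polynomial_ae_eq_of_mem_powSpan hmem
  refine isRLDeriv_of_RL_ae_eq hb hm hφ hP ?_
  filter_upwards [rlL1_ae_eq (α := δ) hU, rlL1_ae_eq (α := (m + 1 : ℕ)) hΦ, hFP,
    Lp.coeFn_sub (rlL1 b δ U) (rlL1 b (m + 1 : ℕ) Φ)] with t hUt hΦt hPt hsub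
  rw [← hδγ, ← hUt, Pi.add_apply, ← hPt, hsub, Pi.sub_apply, hΦt, NNReal.coe_natCast]
  ring

end Derivative

section Equation

variable {ι : Type*} {b : ℝ} {s : Finset ι} {c : ι → ℝ}

lemma coeFn_sum_smul_ae {F : ι → L1Icc b} {f : ι → ℝ → ℝ}
    (h : ∀ j ∈ s, F j =ᵐ[volume.restrict (Icc 0 b)] f j) :
    ⇑(∑ j ∈ s, c j • F j) =ᵐ[volume.restrict (Icc 0 b)] fun t => ∑ j ∈ s, c j * f j t := by
  have hsmul : ∀ᵐ t ∂volume.restrict (Icc 0 b), ∀ j ∈ s, (c j • F j) t = c j * f j t := by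
    refine (Finset.eventually_all s).2 fun j hj => ?_
    filter_upwards [Lp.coeFn_smul (c j) (F j), h j hj] with t hsmul hf
    rw [hsmul, Pi.smul_apply, hf, smul_eq_mul]
  filter_upwards [Lp.coeFn_fun_finsetSum s fun j => c j • F j, hsmul] with t hsum ht
  rw [hsum]
  exact Finset.sum_congr rfl ht

variable {α β : ι → ℝ≥0} {B : ℝ≥0} {N : ℕ} {u w : ℝ → ℝ} {d : ℕ → ℝ}

lemma add_rlComb_eq_of_ae {U W : L1Icc b} (hU : U =ᵐ[volume.restrict (Icc 0 b)] u)
    (hW : W =ᵐ[volume.restrict (Icc 0 b)] w) (hNB : (N : ℝ) < B + 1)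
    (heq : ∀ᵐ t ∂volume.restrict (Icc 0 b), (∑ j ∈ s, c j * RL (α j) u t) + u t =
      RL B w t + ∑ k ∈ Finset.Icc 1 N, d k * t ^ ((B : ℝ) - k)) :
    U + rlComb b s c α U =
      rlL1 b B W + ∑ k ∈ Finset.Icc 1 N, d k • rpowL1 b (B - k) := by
  have hexp : ∀ k ∈ Finset.Icc 1 N, -1 < (B : ℝ) - k := by
    intro k hk
    have : (k : ℝ) ≤ N := by exact_mod_cast (Finset.mem_Icc.1 hk).2
    linarith
  have hsum_left := coeFn_sum_smul_ae (c := c) fun j (_ : j ∈ s) => rlL1_ae_eq (α := α j) hU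
  have hsum_right := coeFn_sum_smul_ae (c := d) fun k hk => rpowL1_ae_eq (b := b) (hexp k hk)
  rw [← rlComb_apply] at hsum_left
  have hleft := (Lp.coeFn_add U (rlComb b s c α U)).trans (hU.add hsum_left)
  have hright := (Lp.coeFn_add (rlL1 b B W) _).trans ((rlL1_ae_eq hW).add hsum_right)
  refine Lp.ext (hleft.trans (.trans ?_ hright.symm))
  filter_upwards [heq] with t ht
  rw [Pi.add_apply, Pi.add_apply, ← ht, add_comm]

lemma exists_isRLDeriv_of_integral_equation_nnreal (hb : 0 < b)
    (hαβ : ∀ j ∈ s, α j + β j = B) (hα : ∀ j ∈ s, 0 < α j)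
    (hN : ∀ j ∈ s, (∃ m : ℕ, (α j : ℝ) = m) ∨ (N : ℝ) < α j + 1) (hNB : (N : ℝ) < B + 1)
    (hu : IntegrableOn u (Icc 0 b)) (hw : IntegrableOn w (Icc 0 b))
    (heq : ∀ᵐ t ∂volume.restrict (Icc 0 b), (∑ j ∈ s, c j * RL (α j) u t) + u t =
      RL B w t + ∑ k ∈ Finset.Icc 1 N, d k * t ^ ((B : ℝ) - k)) :
    ∃ φ : ι → ℝ → ℝ, (∀ j ∈ s, IsRLDeriv b (β j) u (φ j)) ∧
      IsRLDeriv b B u fun t => w t - ∑ j ∈ s, c j * φ j t := by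
  have hF : ∑ k ∈ Finset.Icc 1 N, d k • rpowL1 b (B - k) ∈ powSpan b B N :=
    sum_mem fun k hk => Submodule.smul_mem _ _ (rpowL1_mem_powSpan (Finset.mem_Icc.1 hk))
  obtain ⟨Φ, hΦ, hΨ⟩ := exists_sub_rlL1_mem_powSpan_of_add_rlComb_eq hαβ hα hN hF
    (add_rlComb_eq_of_ae hu.coeFn_toL1 hw.coeFn_toL1 hNB heq)
  refine ⟨fun j => Φ j, fun j hj =>
    isRLDeriv_of_sub_rlL1_mem_powSpan hb hu.coeFn_toL1 (ae_eq_refl _) (hΦ j hj),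
    isRLDeriv_of_sub_rlL1_mem_powSpan hb hu.coeFn_toL1 ?_ hΨ⟩
  exact (Lp.coeFn_sub _ _).trans
    (hw.coeFn_toL1.sub (coeFn_sum_smul_ae fun j _ => ae_eq_refl (Φ j)))

theorem exists_isRLDeriv_of_integral_equation {β : ι → ℝ} {B : ℝ} (hb : 0 < b) (hB : 0 ≤ B)
    (hβ : ∀ j ∈ s, 0 ≤ β j) (hβB : ∀ j ∈ s, β j < B)
    (hN : ∀ j ∈ s, (∃ m : ℕ, B - β j = m) ∨ (N : ℝ) < B - β j + 1) (hNB : (N : ℝ) < B + 1)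
    (hu : IntegrableOn u (Icc 0 b)) (hw : IntegrableOn w (Icc 0 b))
    (heq : ∀ᵐ t ∂volume.restrict (Icc 0 b), (∑ j ∈ s, c j * RL (B - β j) u t) + u t =
      RL B w t + ∑ k ∈ Finset.Icc 1 N, d k * t ^ (B - k)) :
    ∃ φ : ι → ℝ → ℝ, (∀ j ∈ s, IsRLDeriv b (β j) u (φ j)) ∧
      IsRLDeriv b B u fun t => w t - ∑ j ∈ s, c j * φ j t := by
  lift B to ℝ≥0 using hB
  have hβ_coe (j) (hj : j ∈ s) : ((β j).toNNReal : ℝ) = β j := Real.coe_toNNReal _ (hβ j hj)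
  have hα_coe (j) (hj : j ∈ s) : ((B - β j).toNNReal : ℝ) = B - β j :=
    Real.coe_toNNReal _ (sub_nonneg.2 (hβB j hj).le)
  obtain ⟨φ, hφ, hφB⟩ := exists_isRLDeriv_of_integral_equation_nnreal (s := s) (c := c) (d := d)
    (α := fun j => (B - β j).toNNReal) (β := fun j => (β j).toNNReal) hb
    (fun j hj => NNReal.eq (by rw [NNReal.coe_add, hα_coe j hj, hβ_coe j hj, sub_add_cancel]))
    (fun j hj => Real.toNNReal_pos.2 (sub_pos.2 (hβB j hj)))
    (fun j hj => by rw [hα_coe j hj]; exact hN j hj) hNB hu hw (by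
      filter_upwards [heq] with t ht
      rw [← ht, Finset.sum_congr rfl fun j hj => by rw [hα_coe j hj]])
  exact ⟨φ, fun j hj => hβ_coe j hj ▸ hφ j hj, hφB⟩

end Equation

lemma exists_natCast_eq_or_ceil_lt {B x y : ℝ} (hx : x ≤ B)
    (h : (∀ z : ℤ, B - x ≠ z) → x ≤ y) :
    (∃ m : ℕ, B - x = m) ∨ (⌈B - y⌉₊ : ℝ) < B - x + 1 := by
  by_cases hz : ∃ z : ℤ, B - x = z
  · obtain ⟨z, hz⟩ := hz
    have hz₀ : 0 ≤ z := by
      have : (0 : ℝ) ≤ z := hz ▸ sub_nonneg.2 hx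
      exact_mod_cast this
    lift z to ℕ using hz₀
    exact .inl ⟨z, by simpa using hz⟩
  · have hceil : ⌈B - y⌉₊ ≤ ⌈B - x⌉₊ := Nat.ceil_mono (sub_le_sub_left (h (not_exists.1 hz)) B)
    exact .inr ((Nat.cast_le.2 hceil).trans_lt (Nat.ceil_lt_add_one (sub_nonneg.2 hx)))

lemma exists_forall_isRLDeriv_of_Ico {b : ℝ} {n : ℕ} {β c : ℕ → ℝ} {u w : ℝ → ℝ}
    {φ : ℕ → ℝ → ℝ} (hφ : ∀ j ∈ Finset.Ico 1 n, IsRLDeriv b (β j) u (φ j))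
    (hφn : IsRLDeriv b (β n) u fun t => w t - ∑ j ∈ Finset.Ico 1 n, c j * φ j t) :
    ∃ ψ : ℕ → ℝ → ℝ, (∀ j, 1 ≤ j → j ≤ n → IsRLDeriv b (β j) u (ψ j)) ∧
      ∀ t, (∑ j ∈ Finset.Ico 1 n, c j * ψ j t) + ψ n t = w t := by
  set ψ := Function.update φ n fun t => w t - ∑ j ∈ Finset.Ico 1 n, c j * φ j t
  have hψn : ψ n = fun t => w t - ∑ j ∈ Finset.Ico 1 n, c j * φ j t := Function.update_self ..
  have hψ (j) (hjn : j < n) : ψ j = φ j := Function.update_of_ne hjn.ne ..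
  refine ⟨ψ, fun j h1 hjn => ?_, fun t => ?_⟩
  · rcases hjn.eq_or_lt with rfl | hjn
    · rwa [hψn]
    · rw [hψ j hjn]
      exact hφ j (Finset.mem_Ico.2 ⟨h1, hjn⟩)
  · rw [hψn, Finset.sum_congr rfl fun j hj => by rw [hψ j (Finset.mem_Ico.1 hj).2],
      add_sub_cancel]

/-- If `u ∈ L¹[0,b]` solves the fractional integral equation
`(c_1 I^{β_n-β_1} + ⋯ + c_{n-1} I^{β_n-β_{n-1}} + Id) u = I^{β_n} w + f` with
`f ∈ ⟨t^{β_n-1}, …, t^{β_n-⌈β_n-β_*⌉}⟩`, then `u ∈ X_{β_1} ∩ ⋯ ∩ X_{β_n}` and consequently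
`u` is a strong solution of `(c_1 D^{β_1} + ⋯ + c_{n-1} D^{β_{n-1}} + D^{β_n}) u = w`. -/
theorem strong_solution_of_integral_equation (b : ℝ) (hb : 0 < b) (n : ℕ) (hn : 1 ≤ n)
    (β c : ℕ → ℝ)
    (hmono : ∀ i j : ℕ, 1 ≤ i → i < j → j ≤ n → β i < β j) (hβ1 : 0 ≤ β 1)
    (βstar : ℝ)
    (hstar :
      IsGreatest {x : ℝ | ∃ j, 1 ≤ j ∧ j < n ∧ x = β j ∧ ∀ z : ℤ, β n - β j ≠ (z:ℝ)} βstar ∨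
      ({x : ℝ | ∃ j, 1 ≤ j ∧ j < n ∧ x = β j ∧ ∀ z : ℤ, β n - β j ≠ (z:ℝ)} = ∅ ∧ βstar = 0))
    (w : ℝ → ℝ) (hw : IntegrableOn w (Set.Icc 0 b) volume)
    (d : ℕ → ℝ) (u : ℝ → ℝ) (hu : IntegrableOn u (Set.Icc 0 b) volume)
    (heq : ∀ᵐ t ∂(volume.restrict (Set.Icc (0:ℝ) b)),
      (∑ j ∈ Finset.Ico 1 n, c j * RL (β n - β j) u t) + u t
        = RL (β n) w t + ∑ k ∈ Finset.Icc 1 ⌈β n - βstar⌉₊, d k * t ^ (β n - (k:ℝ))) :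
    (∀ j, 1 ≤ j → j ≤ n → MemX b (β j) u) ∧
    ∃ φ : ℕ → ℝ → ℝ, (∀ j, 1 ≤ j → j ≤ n → IsRLDeriv b (β j) u (φ j)) ∧
      (fun t => (∑ j ∈ Finset.Ico 1 n, c j * φ j t) + φ n t)
        =ᵐ[volume.restrict (Set.Icc (0:ℝ) b)] w := by
  have hβ (j) (h1 : 1 ≤ j) (hjn : j ≤ n) : 0 ≤ β j := by
    rcases h1.eq_or_lt with rfl | h1
    exacts [hβ1, hβ1.trans (hmono 1 j le_rfl h1 hjn).le]
  have hβn (j) (hj : j ∈ Finset.Ico 1 n) : β j < β n :=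
    hmono j n (Finset.mem_Ico.1 hj).1 (Finset.mem_Ico.1 hj).2 le_rfl
  obtain ⟨hstar₀, hstarn, hstar_ge⟩ : 0 ≤ βstar ∧ βstar ≤ β n ∧
      ∀ j ∈ Finset.Ico 1 n, (∀ z : ℤ, β n - β j ≠ z) → β j ≤ βstar := by
    simp only [Finset.mem_Ico]
    obtain ⟨⟨j, h1, hjn, rfl, _⟩, hub⟩ | ⟨hempty, rfl⟩ := hstar
    · exact ⟨hβ j h1 hjn.le, (hmono j n h1 hjn le_rfl).le,
        fun i hi hz => hub ⟨i, hi.1, hi.2, rfl, hz⟩⟩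
    · exact ⟨le_rfl, hβ n hn le_rfl,
        fun i hi hz => (hempty.subset ⟨i, hi.1, hi.2, rfl, hz⟩).elim⟩
  have hceil := Nat.ceil_lt_add_one (sub_nonneg.2 hstarn)
  obtain ⟨φ, hφ, hφn⟩ := exists_isRLDeriv_of_integral_equation hb (hβ n hn le_rfl)
    (fun j hj => hβ j (Finset.mem_Ico.1 hj).1 (Finset.mem_Ico.1 hj).2.le) hβn
    (fun j hj => exists_natCast_eq_or_ceil_lt (hβn j hj).le (hstar_ge j hj))
    (by linarith) hu hw heq
  obtain ⟨ψ, hψ, hsum⟩ := exists_forall_isRLDeriv_of_Ico hφ hφn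
  exact ⟨fun j h1 hjn => (hψ j h1 hjn).memX hu, ψ, hψ, .of_forall hsum⟩
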